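/- For every integer a, the greatest common divisor of a⁴·(a²−1)·(a⁴−a²+1)·(a⁶−2a⁴+a³+a²−a+1) and a²+a+1 divides 21. (With t = a²−1 and s = a²(a²−1), this is the gcd of s·(1+s+t+st)·(1+√(st)+st) with a²+a+1, where √(st) = a(a²−1).) -/

import Mathlib

/-!
A root `ω` of `X² + X + 1` satisfies `ω³ = 1`, and reducing the four factors of the product gives
`4 (4 - ω)`. Where this vanishes and `2` can be cancelled, `ω = 4`, so `0 = 4² + 4 + 1 = 21`.
This applies to the image of `a` in `ℤ/g`, where `g` is the gcd: since `a² + a + 1` is odd, so is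
its divisor `g`, and `2` is a unit modulo `g`.
-/

section CommRing

variable {R : Type*} [CommRing R] {ω : R}

theorem pow_three_eq_one_of_sq_add_self_add_one_eq_zero (hω : ω ^ 2 + ω + 1 = 0) : ω ^ 3 = 1 := by
  linear_combination (ω - 1) * hω

theorem big_product_eq_four_mul_four_sub (hω : ω ^ 2 + ω + 1 = 0) :
    ω ^ 4 * (ω ^ 2 - 1) * (ω ^ 4 - ω ^ 2 + 1) *
      (ω ^ 6 - 2 * ω ^ 4 + ω ^ 3 + ω ^ 2 - ω + 1) = 4 * (4 - ω) := by
  have h_cube : ω ^ 3 = 1 := pow_three_eq_one_of_sq_add_self_add_one_eq_zero hω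
  have h_first : ω ^ 4 = ω := by linear_combination ω * h_cube
  have h_second : ω ^ 2 - 1 = -(ω + 2) := by linear_combination hω
  have h_third : ω ^ 4 - ω ^ 2 + 1 = -2 * ω ^ 2 := by linear_combination h_first + hω
  have h_fourth : ω ^ 6 - 2 * ω ^ 4 + ω ^ 3 + ω ^ 2 - ω + 1 = 2 * (1 - 2 * ω) := by
    linear_combination (ω ^ 3 + 2) * h_cube - 2 * h_first + hω
  calc
    _ = ω * -(ω + 2) * (-2 * ω ^ 2) * (2 * (1 - 2 * ω)) := by
      rw [h_fourth, h_third, h_second, h_first]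
    _ = 4 * (ω ^ 3 * ((ω + 2) * (1 - 2 * ω))) := by ring
    _ = 4 * ((ω + 2) * (1 - 2 * ω)) := by rw [h_cube, one_mul]
    _ = 4 * (4 - ω) := by linear_combination -8 * hω

theorem twentyOne_eq_zero_of_big_product_eq_zero (h_two : IsLeftRegular (2 : R))
    (hω : ω ^ 2 + ω + 1 = 0)
    (h_prod : ω ^ 4 * (ω ^ 2 - 1) * (ω ^ 4 - ω ^ 2 + 1) *
      (ω ^ 6 - 2 * ω ^ 4 + ω ^ 3 + ω ^ 2 - ω + 1) = 0) :
    (21 : R) = 0 := by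
  have h_four_mul : 2 ^ 2 * (4 - ω) = 0 := by
    linear_combination h_prod - big_product_eq_four_mul_four_sub hω
  have h_four : 4 - ω = 0 := (h_two.pow 2).mul_left_eq_zero_iff.mp h_four_mul
  linear_combination hω + (ω + 5) * h_four

end CommRing

theorem odd_sq_add_self_add_one (a : ℤ) : Odd (a ^ 2 + a + 1) := by
  have h_even : Even (a ^ 2 + a) := by
    simpa only [mul_add, mul_one, ← sq] using Int.even_mul_succ_self a
  exact h_even.add_one

theorem isUnit_two_zmod_of_odd {n : ℕ} (hn : Odd n) : IsUnit (2 : ZMod n) :=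
  mod_cast (ZMod.isUnit_iff_coprime 2 n).mpr (Nat.coprime_two_left.mpr hn)

/-- For every integer `a`, the gcd of `a⁴(a²−1)(a⁴−a²+1)(a⁶−2a⁴+a³+a²−a+1)` and
`a²+a+1` divides `21`. -/
theorem gcd_big_product_dvd_21 (a : ℤ) :
    Int.gcd (a ^ 4 * (a ^ 2 - 1) * (a ^ 4 - a ^ 2 + 1) *
        (a ^ 6 - 2 * a ^ 4 + a ^ 3 + a ^ 2 - a + 1)) (a ^ 2 + a + 1) ∣ 21 := by
  set P := a ^ 4 * (a ^ 2 - 1) * (a ^ 4 - a ^ 2 + 1) *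
    (a ^ 6 - 2 * a ^ 4 + a ^ 3 + a ^ 2 - a + 1)
  set g := Int.gcd P (a ^ 2 + a + 1)
  have h_prod : (P : ZMod g) = 0 :=
    (ZMod.intCast_zmod_eq_zero_iff_dvd P g).mpr (Int.gcd_dvd_left ..)
  have h_root : ((a ^ 2 + a + 1 : ℤ) : ZMod g) = 0 :=
    (ZMod.intCast_zmod_eq_zero_iff_dvd _ g).mpr (Int.gcd_dvd_right ..)
  have h_odd : Odd g := (odd_sq_add_self_add_one a).natAbs.of_dvd_nat (Int.gcd_dvd_natAbs_right ..)
  have h_two : IsLeftRegular (2 : ZMod g) := (isUnit_two_zmod_of_odd h_odd).isRegular.left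
  have h_twentyOne : (21 : ZMod g) = 0 :=
    twentyOne_eq_zero_of_big_product_eq_zero h_two (ω := a) (mod_cast h_root) (mod_cast h_prod)
  exact (ZMod.natCast_eq_zero_iff 21 g).mp (mod_cast h_twentyOne)
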